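/- arXiv:1911.08412 — 4 statements merged into one kernel-verified Lean document; each statement's English description precedes it below -/
import Mathlib

section
/- Let (Ω, μ) be a probability space and Y₁, Y₂ : Ω → ℝ independent nonnegative integrable random variables. Then E[Y₁ ∨ Y₂] − E[Y₁] = ∫₀^∞ μ{Y₁ ≤ x} · μ{Y₂ > x} dx, where Y₁ ∨ Y₂ denotes the pointwise maximum and the integral is with respect to Lebesgue measure on (0, ∞). -/
open MeasureTheory

/-!
By the layer-cake formula, `E[Y₁ ∨ Y₂]` and `E[Y₁]` are the integrals over `(0, ∞)` of the tails
`μ{t < Y₁ ∨ Y₂}` and `μ{t < Y₁}`. Both tails are integrable (`integrableOn_tail`), so the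
difference of the expectations is the integral of the difference of the tails, which is
`μ({Y₁ ≤ t} ∩ {t < Y₂})`; this factors by independence.
-/

theorem integrableOn_tail {Ω : Type*} [MeasurableSpace Ω] {μ : Measure Ω}
    [IsFiniteMeasure μ] {f : Ω → ℝ} (hf : Integrable f μ) (hpos : ∀ ω, 0 ≤ f ω) :
    IntegrableOn (fun t => μ.real {ω | t < f ω}) (Set.Ioi 0) := by
  have hanti : Antitone (fun t : ℝ => μ {ω | t < f ω}) :=
    fun s t hst => measure_mono fun ω (hω : t < f ω) => lt_of_le_of_lt hst hω
  refine integrable_toReal_of_lintegral_ne_top hanti.measurable.aemeasurable ?_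
  rw [← lintegral_eq_lintegral_meas_lt μ (Filter.Eventually.of_forall hpos) hf.aemeasurable]
  exact hf.lintegral_lt_top.ne

/-- For independent nonnegative integrable random variables `Y₁, Y₂` on a probability space
`(Ω, μ)`, `E[Y₁ ∨ Y₂] − E[Y₁] = ∫₀^∞ μ{Y₁ ≤ x} · μ{Y₂ > x} dx`. -/
theorem expectation_max_sub_expectation {Ω : Type*} [MeasurableSpace Ω] (μ : Measure Ω)
    [IsProbabilityMeasure μ] (Y₁ Y₂ : Ω → ℝ) (hY₁ : Measurable Y₁) (hY₂ : Measurable Y₂)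
    (hY₁pos : ∀ ω, 0 ≤ Y₁ ω) (hY₂pos : ∀ ω, 0 ≤ Y₂ ω)
    (hY₁int : Integrable Y₁ μ) (hY₂int : Integrable Y₂ μ)
    (hindep : ProbabilityTheory.IndepFun Y₁ Y₂ μ) :
    (∫ ω, max (Y₁ ω) (Y₂ ω) ∂μ) - ∫ ω, Y₁ ω ∂μ =
      ∫ x in Set.Ioi (0 : ℝ), (μ {ω | Y₁ ω ≤ x}).toReal * (μ {ω | x < Y₂ ω}).toReal := by
  have hmax : Integrable (fun ω => max (Y₁ ω) (Y₂ ω)) μ := hY₁int.sup hY₂int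
  have hmaxpos : ∀ ω, 0 ≤ max (Y₁ ω) (Y₂ ω) := fun ω => le_max_of_le_left (hY₁pos ω)
  rw [hmax.integral_eq_integral_meas_lt (Filter.Eventually.of_forall hmaxpos),
    hY₁int.integral_eq_integral_meas_lt (Filter.Eventually.of_forall hY₁pos),
    ← integral_sub (integrableOn_tail hmax hmaxpos) (integrableOn_tail hY₁int hY₁pos)]
  congr 1
  funext t
  have hsub : {ω | t < Y₁ ω} ⊆ {ω | t < max (Y₁ ω) (Y₂ ω)} :=
    fun ω (hω : t < Y₁ ω) => lt_max_of_lt_left hω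
  have hdiff : {ω | t < max (Y₁ ω) (Y₂ ω)} \ {ω | t < Y₁ ω} =
      Y₁ ⁻¹' Set.Iic t ∩ Y₂ ⁻¹' Set.Ioi t := by
    ext ω
    simp only [Set.mem_sdiff, Set.mem_ofPred_eq, lt_max_iff, Set.mem_inter_iff, Set.mem_preimage,
      Set.mem_Iic, Set.mem_Ioi]
    grind
  rw [← measureReal_sdiff hsub (measurableSet_lt measurable_const hY₁), hdiff, measureReal_def,
    hindep.measure_inter_preimage_eq_mul _ _ measurableSet_Iic measurableSet_Ioi,
    ENNReal.toReal_mul]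
  rfl
end

section
/- Let a, c be real numbers with 0 < a < c. Then the function t ↦ sinh(a t) / sinh(c t) is strictly decreasing on (0, ∞); moreover its limit as t → 0⁺ equals a/c, so in particular 0 < sinh(a t)/sinh(c t) < a/c for all t > 0. -/
/-!
The derivative of `sinh (a t) / sinh (c t)` has the sign of the Wronskian
`W t = a cosh (a t) sinh (c t) - c sinh (a t) cosh (c t)`. Since `W 0 = 0` and
`W' t = (a² - c²) sinh (a t) sinh (c t) < 0` for `t > 0`, the ratio is strictly decreasing.
Its limit at `0⁺` is the quotient `a / c` of the derivatives at `0` of numerator and denominator,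
and a strictly decreasing function on `(0, ∞)` stays strictly below its limit at `0⁺`.
-/

open Filter

lemma hasDerivAt_sinh_const_mul (b t : ℝ) :
    HasDerivAt (fun t : ℝ => Real.sinh (b * t)) (b * Real.cosh (b * t)) t := by
  have h := ((hasDerivAt_id t).const_mul b).sinh
  simpa [mul_comm] using h

lemma hasDerivAt_cosh_const_mul (b t : ℝ) :
    HasDerivAt (fun t : ℝ => Real.cosh (b * t)) (b * Real.sinh (b * t)) t := by
  have h := ((hasDerivAt_id t).const_mul b).cosh
  simpa [mul_comm] using h

/-- The Wronskian of `sinh (a t)` and `sinh (c t)`, the numerator of the derivative of their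
ratio, is negative for `t > 0`. -/
lemma sinh_wronskian_neg {a c : ℝ} (ha : 0 < a) (hac : a < c) {t : ℝ} (ht : 0 < t) :
    a * Real.cosh (a * t) * Real.sinh (c * t) - Real.sinh (a * t) * (c * Real.cosh (c * t)) < 0 := by
  have hc : 0 < c := ha.trans hac
  have hd : ∀ x : ℝ, HasDerivAt
      (fun t : ℝ => a * Real.cosh (a * t) * Real.sinh (c * t)
        - Real.sinh (a * t) * (c * Real.cosh (c * t)))
      ((a ^ 2 - c ^ 2) * (Real.sinh (a * x) * Real.sinh (c * x))) x := by
    intro x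
    refine ((((hasDerivAt_cosh_const_mul a x).const_mul a).mul
      (hasDerivAt_sinh_const_mul c x)).sub ((hasDerivAt_sinh_const_mul a x).mul
      ((hasDerivAt_cosh_const_mul c x).const_mul c))).congr_deriv ?_
    ring
  have hanti := strictAntiOn_of_deriv_neg (convex_Ici (0 : ℝ))
    (fun x _ => (hd x).continuousAt.continuousWithinAt) (fun x hx => by
      rw [interior_Ici, Set.mem_Ioi] at hx
      rw [(hd x).deriv]
      exact mul_neg_of_neg_of_pos (by nlinarith)
        (mul_pos (Real.sinh_pos_iff.2 (mul_pos ha hx)) (Real.sinh_pos_iff.2 (mul_pos hc hx))))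
  simpa using hanti (Set.mem_Ici.2 le_rfl) (Set.mem_Ici.2 ht.le) ht

/-- For `0 < a < c`, the function `t ↦ sinh(a t)/sinh(c t)` is strictly decreasing on
`(0, ∞)`, its limit as `t → 0⁺` is `a/c`, and `0 < sinh(a t)/sinh(c t) < a/c` for all
`t > 0`. -/
theorem sinh_ratio_strictAnti (a c : ℝ) (ha : 0 < a) (hac : a < c) :
    StrictAntiOn (fun t : ℝ => Real.sinh (a * t) / Real.sinh (c * t)) (Set.Ioi 0) ∧
    Tendsto (fun t : ℝ => Real.sinh (a * t) / Real.sinh (c * t))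
      (nhdsWithin 0 (Set.Ioi 0)) (nhds (a / c)) ∧
    ∀ t : ℝ, 0 < t →
      0 < Real.sinh (a * t) / Real.sinh (c * t) ∧
        Real.sinh (a * t) / Real.sinh (c * t) < a / c := by
  have hc : 0 < c := ha.trans hac
  have hpos : ∀ b : ℝ, 0 < b → ∀ t : ℝ, 0 < t → 0 < Real.sinh (b * t) :=
    fun b hb t ht => Real.sinh_pos_iff.2 (mul_pos hb ht)
  have hd : ∀ x : ℝ, 0 < x → HasDerivAt (fun t : ℝ => Real.sinh (a * t) / Real.sinh (c * t))
      ((a * Real.cosh (a * x) * Real.sinh (c * x)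
        - Real.sinh (a * x) * (c * Real.cosh (c * x))) / Real.sinh (c * x) ^ 2) x :=
    fun x hx => (hasDerivAt_sinh_const_mul a x).div (hasDerivAt_sinh_const_mul c x)
      (hpos c hc x hx).ne'
  have hanti : StrictAntiOn (fun t : ℝ => Real.sinh (a * t) / Real.sinh (c * t)) (Set.Ioi 0) := by
    refine strictAntiOn_of_deriv_neg (convex_Ioi (0 : ℝ))
      (fun x hx => (hd x hx).continuousAt.continuousWithinAt) (fun x hx => ?_)
    rw [interior_Ioi] at hx
    rw [(hd x hx).deriv]
    exact div_neg_of_neg_of_pos (sinh_wronskian_neg ha hac hx) (pow_pos (hpos c hc x hx) 2)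
  have hslope : ∀ b : ℝ, Tendsto (fun t : ℝ => t⁻¹ * Real.sinh (b * t))
      (nhdsWithin 0 (Set.Ioi 0)) (nhds b) := by
    intro b
    simpa using (hasDerivAt_sinh_const_mul b 0).tendsto_slope_zero_right
  have hlim : Tendsto (fun t : ℝ => Real.sinh (a * t) / Real.sinh (c * t))
      (nhdsWithin 0 (Set.Ioi 0)) (nhds (a / c)) := by
    refine ((hslope a).div (hslope c) hc.ne').congr' ?_
    filter_upwards [self_mem_nhdsWithin] with t ht
    exact mul_div_mul_left _ _ (inv_ne_zero (ne_of_gt ht))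
  refine ⟨hanti, hlim, fun t ht => ⟨div_pos (hpos a ha t ht) (hpos c hc t ht), ?_⟩⟩
  -- Passing to the limit only gives `≤`; the intermediate point `t / 2` makes it strict.
  have ht2 : 0 < t / 2 := half_pos ht
  refine (hanti (Set.mem_Ioi.2 ht2) (Set.mem_Ioi.2 ht) (half_lt_self ht)).trans_le ?_
  refine ge_of_tendsto hlim ?_
  filter_upwards [Ioo_mem_nhdsGT ht2] with s hs
  exact (hanti (Set.mem_Ioi.2 hs.1) (Set.mem_Ioi.2 ht2) hs.2).le
end

section
/- Let l₁ < r₁ and l₂ < r₂ be real numbers, β₁, β₂ > 0, B₁, B₂ ∈ ℝ, and let L be a real number with 0 < L < min(B₁², B₂²). Define, for (x, y) ∈ [l₁, r₁] × [l₂, r₂], E(x,y) = exp( ((x−l₁)/β₁)·B₁ + ((y−l₂)/β₂)·B₂ ), Λ(x,y) = E(x,y) · [ sinh( ((r₁−x)/β₁)·√(B₁²+L) ) / sinh( ((r₁−l₁)/β₁)·√(B₁²+L) ) ] · [ sinh( ((r₂−y)/β₂)·√(B₂²+L) ) / sinh( ((r₂−l₂)/β₂)·√(B₂²+L) ) ],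 and U(x,y) defined by the same formula with √(B₁²+L), √(B₂²+L) replaced by √(B₁²−L), √(B₂²−L). Then for all (x,y) ∈ [l₁, r₁] × [l₂, r₂] one has 0 ≤ Λ(x,y) ≤ U(x,y), and Λ(x,y) > 0 whenever x < r₁ and y < r₂. -/
/-!
The exponential prefactor is the same positive function in both expressions, so the claim reduces
to one variable: for `0 < a ≤ b` and `0 ≤ s ≤ t` with `t > 0`,
`sinh (s * b) / sinh (t * b) ≤ sinh (s * a) / sinh (t * a)`.
Equivalently, `x ↦ sinh (b * x) / sinh (a * x)` is nondecreasing on `(0, ∞)`. The numerator of its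
derivative, `b * cosh (b * x) * sinh (a * x) - a * cosh (a * x) * sinh (b * x)`, vanishes at `0`
and itself has derivative `(b ^ 2 - a ^ 2) * sinh (a * x) * sinh (b * x) ≥ 0`
(`sinh_wronskian_nonneg`). This is applied in each coordinate with `a = √(B² - L)` and
`b = √(B² + L)`; the hypothesis `L < B²` is what makes `a` positive.
-/

open Real

/-- The Wronskian of `sinh (a * ·)` and `sinh (b * ·)` is nonnegative on `[0, ∞)`. -/
lemma sinh_wronskian_nonneg {a b x : ℝ} (ha : 0 < a) (hab : a ≤ b) (hx : 0 ≤ x) :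
    0 ≤ b * cosh (b * x) * sinh (a * x) - a * cosh (a * x) * sinh (b * x) := by
  have hd : ∀ y : ℝ, HasDerivAt
      (fun x => b * cosh (b * x) * sinh (a * x) - a * cosh (a * x) * sinh (b * x))
      ((b ^ 2 - a ^ 2) * (sinh (a * y) * sinh (b * y))) y := by
    intro y
    have h1 : HasDerivAt (fun x : ℝ => a * x) a y := by
      simpa using (hasDerivAt_id y).const_mul a
    have h2 : HasDerivAt (fun x : ℝ => b * x) b y := by
      simpa using (hasDerivAt_id y).const_mul b
    refine (((h2.cosh.const_mul b).mul h1.sinh).sub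
      ((h1.cosh.const_mul a).mul h2.sinh)).congr_deriv ?_
    ring
  have hmono : MonotoneOn
      (fun x => b * cosh (b * x) * sinh (a * x) - a * cosh (a * x) * sinh (b * x))
      (Set.Ici 0) := by
    refine monotoneOn_of_deriv_nonneg (convex_Ici 0)
      (fun y _ => (hd y).continuousAt.continuousWithinAt)
      (fun y _ => (hd y).differentiableAt.differentiableWithinAt) fun y hy => ?_
    rw [interior_Ici] at hy
    have hy0 : 0 ≤ y := le_of_lt hy
    rw [(hd y).deriv]
    refine mul_nonneg (by nlinarith) (mul_nonneg ?_ ?_) <;> rw [sinh_nonneg_iff]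
    · exact mul_nonneg ha.le hy0
    · exact mul_nonneg (ha.le.trans hab) hy0
  simpa using hmono Set.self_mem_Ici (Set.mem_Ici.2 hx) hx

lemma monotoneOn_sinh_mul_div_sinh_mul {a b : ℝ} (ha : 0 < a) (hab : a ≤ b) :
    MonotoneOn (fun x => sinh (b * x) / sinh (a * x)) (Set.Ioi 0) := by
  have hd : ∀ y : ℝ, 0 < y → HasDerivAt (fun x => sinh (b * x) / sinh (a * x))
      ((b * cosh (b * y) * sinh (a * y) - a * cosh (a * y) * sinh (b * y)) /
        sinh (a * y) ^ 2) y := by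
    intro y hy
    have h1 : HasDerivAt (fun x : ℝ => a * x) a y := by
      simpa using (hasDerivAt_id y).const_mul a
    have h2 : HasDerivAt (fun x : ℝ => b * x) b y := by
      simpa using (hasDerivAt_id y).const_mul b
    refine (h2.sinh.div h1.sinh (sinh_pos_iff.2 (mul_pos ha hy)).ne').congr_deriv ?_
    ring
  refine monotoneOn_of_deriv_nonneg (convex_Ioi 0)
    (fun y hy => (hd y hy).continuousAt.continuousWithinAt) ?_ ?_
  · rw [interior_Ioi]
    exact fun y hy => (hd y hy).differentiableAt.differentiableWithinAt
  · rw [interior_Ioi]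
    intro y hy
    rw [(hd y hy).deriv]
    exact div_nonneg (sinh_wronskian_nonneg ha hab (le_of_lt hy)) (sq_nonneg _)

/-- One-dimensional comparison: the normalized profile `sinh (s * k) / sinh (t * k)` decreases as
the rate `k` grows. -/
lemma sinh_ratio_le {a b s t : ℝ} (ha : 0 < a) (hab : a ≤ b) (hs : 0 ≤ s) (hst : s ≤ t)
    (ht : 0 < t) : sinh (s * b) / sinh (t * b) ≤ sinh (s * a) / sinh (t * a) := by
  -- at `s = 0` the monotone quotient is not defined, but both sides vanish
  rcases hs.eq_or_lt with rfl | hs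
  · simp
  have hb : 0 < b := ha.trans_le hab
  have h := monotoneOn_sinh_mul_div_sinh_mul ha hab (Set.mem_Ioi.2 hs) (Set.mem_Ioi.2 ht) hst
  simp only [mul_comm b, mul_comm a] at h
  rw [div_le_div_iff₀ (sinh_pos_iff.2 (mul_pos hs ha)) (sinh_pos_iff.2 (mul_pos ht ha))] at h
  rw [div_le_div_iff₀ (sinh_pos_iff.2 (mul_pos ht hb)) (sinh_pos_iff.2 (mul_pos ht ha))]
  linarith

lemma sinh_ratio_nonneg {k s t : ℝ} (hk : 0 ≤ k) (hs : 0 ≤ s) (ht : 0 ≤ t) :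
    0 ≤ sinh (s * k) / sinh (t * k) :=
  div_nonneg (sinh_nonneg_iff.2 (mul_nonneg hs hk)) (sinh_nonneg_iff.2 (mul_nonneg ht hk))

lemma sinh_ratio_pos {k s t : ℝ} (hk : 0 < k) (hs : 0 < s) (ht : 0 < t) :
    0 < sinh (s * k) / sinh (t * k) :=
  div_pos (sinh_pos_iff.2 (mul_pos hs hk)) (sinh_pos_iff.2 (mul_pos ht hk))

/-- **Ordering of the explicit sub-solution and super-solution (world `ij = 00`).**
On the rectangle `[l₁, r₁] × [l₂, r₂]`, with `0 < L < min(B₁², B₂²)`, the sub-solution `Λ`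
(built from `√(B² + L)`) and super-solution `U` (built from `√(B² − L)`) satisfy
`0 ≤ Λ ≤ U`, with `Λ > 0` in the interior region `x < r₁`, `y < r₂`. -/
theorem subsolution_le_supersolution (l₁ r₁ l₂ r₂ β₁ β₂ B₁ B₂ L : ℝ)
    (h₁ : l₁ < r₁) (h₂ : l₂ < r₂) (hβ₁ : 0 < β₁) (hβ₂ : 0 < β₂)
    (hL₀ : 0 < L) (hL : L < min (B₁ ^ 2) (B₂ ^ 2))
    (E Λ U : ℝ → ℝ → ℝ)
    (hE : ∀ x y, E x y = Real.exp ((x - l₁) / β₁ * B₁ + (y - l₂) / β₂ * B₂))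
    (hΛ : ∀ x y, Λ x y = E x y *
      (Real.sinh ((r₁ - x) / β₁ * Real.sqrt (B₁ ^ 2 + L)) /
        Real.sinh ((r₁ - l₁) / β₁ * Real.sqrt (B₁ ^ 2 + L))) *
      (Real.sinh ((r₂ - y) / β₂ * Real.sqrt (B₂ ^ 2 + L)) /
        Real.sinh ((r₂ - l₂) / β₂ * Real.sqrt (B₂ ^ 2 + L))))
    (hU : ∀ x y, U x y = E x y *
      (Real.sinh ((r₁ - x) / β₁ * Real.sqrt (B₁ ^ 2 - L)) /
        Real.sinh ((r₁ - l₁) / β₁ * Real.sqrt (B₁ ^ 2 - L))) *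
      (Real.sinh ((r₂ - y) / β₂ * Real.sqrt (B₂ ^ 2 - L)) /
        Real.sinh ((r₂ - l₂) / β₂ * Real.sqrt (B₂ ^ 2 - L)))) :
    ∀ x ∈ Set.Icc l₁ r₁, ∀ y ∈ Set.Icc l₂ r₂,
      0 ≤ Λ x y ∧ Λ x y ≤ U x y ∧ (x < r₁ → y < r₂ → 0 < Λ x y) := by
  intro x hx y hy
  obtain ⟨hL1, hL2⟩ := lt_min_iff.1 hL
  have ha₁ : 0 < √(B₁ ^ 2 - L) := Real.sqrt_pos.2 (by linarith)
  have ha₂ : 0 < √(B₂ ^ 2 - L) := Real.sqrt_pos.2 (by linarith)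
  have hab₁ : √(B₁ ^ 2 - L) ≤ √(B₁ ^ 2 + L) := Real.sqrt_le_sqrt (by linarith)
  have hab₂ : √(B₂ ^ 2 - L) ≤ √(B₂ ^ 2 + L) := Real.sqrt_le_sqrt (by linarith)
  have hb₁ := ha₁.trans_le hab₁
  have hb₂ := ha₂.trans_le hab₂
  have hs₁ : 0 ≤ (r₁ - x) / β₁ := div_nonneg (by linarith [hx.2]) hβ₁.le
  have hs₂ : 0 ≤ (r₂ - y) / β₂ := div_nonneg (by linarith [hy.2]) hβ₂.le
  have ht₁ : 0 < (r₁ - l₁) / β₁ := div_pos (by linarith) hβ₁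
  have ht₂ : 0 < (r₂ - l₂) / β₂ := div_pos (by linarith) hβ₂
  have hst₁ : (r₁ - x) / β₁ ≤ (r₁ - l₁) / β₁ :=
    div_le_div_of_nonneg_right (by linarith [hx.1]) hβ₁.le
  have hst₂ : (r₂ - y) / β₂ ≤ (r₂ - l₂) / β₂ :=
    div_le_div_of_nonneg_right (by linarith [hy.1]) hβ₂.le
  have hE0 : 0 < E x y := by rw [hE]; exact Real.exp_pos _
  have hn₁ := sinh_ratio_nonneg hb₁.le hs₁ ht₁.le
  have hn₂ := sinh_ratio_nonneg hb₂.le hs₂ ht₂.le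
  rw [hΛ, hU]
  refine ⟨mul_nonneg (mul_nonneg hE0.le hn₁) hn₂, ?_, fun hxr hyr => ?_⟩
  · exact mul_le_mul
      (mul_le_mul_of_nonneg_left (sinh_ratio_le ha₁ hab₁ hs₁ hst₁ ht₁) hE0.le)
      (sinh_ratio_le ha₂ hab₂ hs₂ hst₂ ht₂) hn₂
      (mul_nonneg hE0.le (sinh_ratio_nonneg ha₁.le hs₁ ht₁.le))
  · exact mul_pos
      (mul_pos hE0 (sinh_ratio_pos hb₁ (div_pos (by linarith) hβ₁) ht₁))
      (sinh_ratio_pos hb₂ (div_pos (by linarith) hβ₂) ht₂)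
end

section
/- Let l₁ < r₁, l₂ < r₂, and m₁, m₂, σ₁, σ₂ be real numbers with σ₁, σ₂ ≠ 0. Define ψ : ℝ² → ℝ by ψ(x, y) = [ (e^{−l₁} − e^{−x}) / (e^{−l₁} − e^{−r₁}) ] · [ (e^{−l₂} − e^{−y}) / (e^{−l₂} − e^{−r₂}) ]. Then ψ satisfies 𝓛₁₁,₀ ψ = 0 everywhere, that is, (m₁²/(2σ₁²)) ( ∂²ψ/∂x² + ∂ψ/∂x ) + (m₂²/(2σ₂²)) ( ∂²ψ/∂y² + ∂ψ/∂y ) = 0 at every point of ℝ², together with the world-11 boundary conditions ψ(r₁, r₂) = 1, ψ(l₁, y) = 0 for all y, and ψ(x, l₂) = 0 for all x. -/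
/-!
`ψ` is a product of a function of `x` and a function of `y`, and in each variable separately it is
affine in the decaying exponential: `x ↦ a * (c - exp (-x))`. Such a function is annihilated by
`∂² + ∂` (constants and `exp (-x)` span the kernel of this operator), so both brackets of the
generator vanish separately (`deriv_deriv_add_deriv_affine_exp_neg`). The boundary values are
immediate once the denominators are known to be nonzero, which follows from `l₁ < r₁`, `l₂ < r₂`.
-/

theorem hasDerivAt_affine_exp_neg (a c x : ℝ) :
    HasDerivAt (fun t => a * (c - Real.exp (-t))) (a * Real.exp (-x)) x :=
  (((hasDerivAt_neg x).exp.const_sub c).const_mul a).congr_deriv (by ring)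

/-- `a * (c - exp (-t))` lies in the kernel of `∂² + ∂`. -/
theorem deriv_deriv_add_deriv_affine_exp_neg {f : ℝ → ℝ} (a c : ℝ)
    (hf : ∀ t, f t = a * (c - Real.exp (-t))) (x : ℝ) :
    deriv (fun t => deriv f t) x + deriv f x = 0 := by
  have h1 : deriv f = fun t => a * Real.exp (-t) := by
    rw [funext hf]
    exact funext fun t => (hasDerivAt_affine_exp_neg a c t).deriv
  have h2 : HasDerivAt (fun t => a * Real.exp (-t)) (-(a * Real.exp (-x))) x :=
    ((hasDerivAt_neg x).exp.const_mul a).congr_deriv (by ring)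
  simp only [h1, h2.deriv]
  ring

/-- **The world-11 likelihood function solves `𝓛₁₁,₀ ψ = 0` with its boundary conditions.**
With `ψ(x,y) = [(e^{−l₁} − e^{−x})/(e^{−l₁} − e^{−r₁})]·[(e^{−l₂} − e^{−y})/(e^{−l₂} − e^{−r₂})]`,
one has `(m₁²/(2σ₁²))(ψ_{xx} + ψ_x) + (m₂²/(2σ₂²))(ψ_{yy} + ψ_y) = 0` everywhere, together
with `ψ(r₁, r₂) = 1`, `ψ(l₁, y) = 0` for all `y`, and `ψ(x, l₂) = 0` for all `x`. -/
theorem likelihood_world11 (l₁ r₁ l₂ r₂ m₁ m₂ σ₁ σ₂ : ℝ)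
    (h₁ : l₁ < r₁) (h₂ : l₂ < r₂) (hσ₁ : σ₁ ≠ 0) (hσ₂ : σ₂ ≠ 0)
    (ψ : ℝ → ℝ → ℝ)
    (hψ : ∀ x y, ψ x y =
      (Real.exp (-l₁) - Real.exp (-x)) / (Real.exp (-l₁) - Real.exp (-r₁)) *
        ((Real.exp (-l₂) - Real.exp (-y)) / (Real.exp (-l₂) - Real.exp (-r₂)))) :
    (∀ x y : ℝ,
      m₁ ^ 2 / (2 * σ₁ ^ 2) *
          (deriv (fun x' => deriv (fun x'' => ψ x'' y) x') x + deriv (fun x' => ψ x' y) x) +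
        m₂ ^ 2 / (2 * σ₂ ^ 2) *
          (deriv (fun y' => deriv (fun y'' => ψ x y'') y') y + deriv (fun y' => ψ x y') y) =
        0) ∧
    ψ r₁ r₂ = 1 ∧ (∀ y : ℝ, ψ l₁ y = 0) ∧ (∀ x : ℝ, ψ x l₂ = 0) := by
  have hd₁ : Real.exp (-l₁) - Real.exp (-r₁) ≠ 0 :=
    (sub_pos.2 (Real.exp_lt_exp.2 (neg_lt_neg h₁))).ne'
  have hd₂ : Real.exp (-l₂) - Real.exp (-r₂) ≠ 0 :=
    (sub_pos.2 (Real.exp_lt_exp.2 (neg_lt_neg h₂))).ne'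
  refine ⟨fun x y => ?_, ?_, fun y => ?_, fun x => ?_⟩
  · rw [deriv_deriv_add_deriv_affine_exp_neg (f := fun x' => ψ x' y)
        ((Real.exp (-l₁) - Real.exp (-r₁))⁻¹ *
          ((Real.exp (-l₂) - Real.exp (-y)) / (Real.exp (-l₂) - Real.exp (-r₂))))
        (Real.exp (-l₁)) (fun t => by rw [hψ]; ring) x,
      deriv_deriv_add_deriv_affine_exp_neg (f := fun y' => ψ x y')
        ((Real.exp (-l₁) - Real.exp (-x)) / (Real.exp (-l₁) - Real.exp (-r₁)) *
          (Real.exp (-l₂) - Real.exp (-r₂))⁻¹)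
        (Real.exp (-l₂)) (fun t => by rw [hψ]; ring) y]
    ring
  · rw [hψ, div_self hd₁, div_self hd₂, one_mul]
  · simp [hψ]
  · simp [hψ]
end
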